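/- arXiv:1304.0871 — 3 statements merged into one kernel-verified Lean document; each statement's English description precedes it below -/
import Mathlib

section
/- For every t ≥ 2 and k ≥ 1, if n ≥ 2k + ⌊(k-1)/(2^{t-1}-1)⌋, then every t-coloring of the edges of K_n contains a matching of size k using at most t-1 of the colors. -/
/-!
Fix `q = n - 2k`, and suppose that for no color `i` the graph `G_i` of all edges not colored `i`
has a matching of size `k`. Tutte's theorem, applied to `G_i` with `q` universal vertices added,
gives the Tutte–Berge obstruction (`exists_berge_set`): a set `S_i` such that `G_i - S_i` has at
least `|S_i| + q + 2` components. All edges between different components have color `i`, so two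
vertices outside `S_i ∪ S_j` (with `i ≠ j`) are in the same component for `i` or for `j`.

If `|S_i| ≤ |S_j|`, then `V \ (S_i ∪ S_j)` must lie inside one component for `i`
(`BergeFamily.label_eq`), so at least `|S_i| + q + 1` vertices outside `S_i` lie in the other
components, all of them inside `S_j` (`BergeFamily.le_card_small`). For a fixed `j` these subsets of
`S_j` are pairwise disjoint, because no three of the sets `S_i` cover all vertices
(`BergeFamily.exists_not_mem`). Hence `|S_j|` is at least the sum of `|S_i| + q + 1` over the other
indices `i` with `|S_i| ≤ |S_j|`, and these sizes at least double at each step: the largest is at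
least `(2^(t-1) - 1)(q + 1)`. Since `n ≥ |S_j| + (|S_j| + q + 2)`, this contradicts
`k - 1 < (2^(t-1) - 1)(q + 1)`.
-/

/-- `M` is a matching given by pairs of endpoints: every edge has distinct endpoints
and distinct edges share no endpoint. -/
def PairMatching {α : Type*} (M : Finset (α × α)) : Prop :=
  (∀ e ∈ M, e.1 ≠ e.2) ∧
  ∀ e ∈ M, ∀ f ∈ M, e ≠ f → e.1 ≠ f.1 ∧ e.1 ≠ f.2 ∧ e.2 ≠ f.1 ∧ e.2 ≠ f.2

/-! ### The Tutte–Berge obstruction -/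

/-- The graph obtained from `G` by adding `q` vertices, each adjacent to every other vertex. -/
def coneGraph {V : Type*} (G : SimpleGraph V) (q : ℕ) : SimpleGraph (V ⊕ Fin q) where
  Adj x y := x ≠ y ∧ ∀ a b, x = Sum.inl a → y = Sum.inl b → G.Adj a b
  symm := ⟨fun _ _ h => ⟨h.1.symm, fun a b ha hb => (h.2 b a hb ha).symm⟩⟩
  loopless := ⟨fun _ h => h.1 rfl⟩

/-- At most `q` vertices of `G` are matched to the added vertices, so the other at least `2k`
vertices of `G` are matched among themselves. -/
lemma exists_pairMatching_of_cone {n k q : ℕ} (hn : n = 2 * k + q) (G : SimpleGraph (Fin n))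
    (M : (coneGraph G q).Subgraph) (hM : M.IsPerfectMatching) :
    ∃ N : Finset (Fin n × Fin n), PairMatching N ∧ N.card = k ∧ ∀ e ∈ N, G.Adj e.1 e.2 := by
  classical
  have hex : ∀ v, ∃! w, M.Adj v w := fun v => hM.1 (hM.2 v)
  choose g hg hgu using hex
  have hgu' : ∀ v w, M.Adj v w → w = g v := fun v w h => hgu v w h
  have hadj : ∀ a b : Fin n, M.Adj (Sum.inl a) (Sum.inl b) → G.Adj a b := fun a b h =>
    h.adj_sub.2 a b rfl rfl
  have huniq : ∀ a b c : Fin n, M.Adj (Sum.inl a) (Sum.inl b) → M.Adj (Sum.inl a) (Sum.inl c) →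
      b = c := fun a b c h1 h2 => by
    have := (hgu' _ _ h1).trans (hgu' _ _ h2).symm
    exact Sum.inl_injective this
  let D : Finset (Fin n × Fin n) := Finset.univ.filter fun e => M.Adj (Sum.inl e.1) (Sum.inl e.2)
  let E : Finset (Fin n × Fin n) := D.filter fun e => e.1 < e.2
  have hE : ∀ e ∈ E, M.Adj (Sum.inl e.1) (Sum.inl e.2) ∧ e.1 < e.2 := fun e he => by
    simpa [E, D] using he
  have hD : D ⊆ E ∪ E.image Prod.swap := by
    intro e he
    have he' : M.Adj (Sum.inl e.1) (Sum.inl e.2) := by simpa [D] using he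
    rcases lt_or_gt_of_ne (hadj _ _ he').ne with h | h
    · exact Finset.mem_union_left _ (by simp [E, he, h])
    · refine Finset.mem_union_right _ (Finset.mem_image.2 ⟨e.swap, ?_, by simp⟩)
      simpa [E, D, h] using he'.symm
  have hDE : D.card ≤ 2 * E.card := by
    have h1 := Finset.card_le_card hD
    have h2 := Finset.card_union_le E (E.image Prod.swap)
    have h3 := Finset.card_image_le (s := E) (f := Prod.swap)
    omega
  let A : Finset (Fin n) := D.image Prod.fst
  have hB : (Aᶜ).card ≤ q := by
    have : (Aᶜ.image fun a => g (Sum.inl a)) ⊆ Finset.univ.image (Sum.inr : Fin q → Fin n ⊕ Fin q) := by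
      intro y hy
      obtain ⟨a, ha, rfl⟩ := Finset.mem_image.1 hy
      rcases hga : g (Sum.inl a) with b | j
      · exfalso
        refine Finset.mem_compl.1 ha (Finset.mem_image.2 ⟨(a, b), ?_, rfl⟩)
        have := hg (Sum.inl a)
        rw [hga] at this
        simpa [D] using this
      · simp
    have h1 := Finset.card_le_card this
    rw [Finset.card_image_of_injOn] at h1
    · refine h1.trans (Finset.card_image_le.trans (by simp))
    · intro a _ b _ hab
      have h1 := (hg (Sum.inl a)).symm
      have h2 := (hg (Sum.inl b)).symm
      simp only at hab
      rw [← hab] at h2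
      exact Sum.inl_injective ((hgu' _ _ h1).trans (hgu' _ _ h2).symm)
  have hA : A.card ≤ D.card := Finset.card_image_le
  have hAc := Finset.card_compl_add_card A
  rw [Fintype.card_fin] at hAc
  obtain ⟨N, hN, hNk⟩ := Finset.exists_subset_card_eq (s := E) (n := k) (by omega)
  refine ⟨N, ⟨fun e he => (hE e (hN he)).2.ne, ?_⟩, hNk, fun e he => hadj _ _ (hE e (hN he)).1⟩
  intro e he f hf hne
  obtain ⟨he1, he2⟩ := hE e (hN he)
  obtain ⟨hf1, hf2⟩ := hE f (hN hf)
  refine ⟨fun h => hne ?_, fun h => ?_, fun h => ?_, fun h => hne ?_⟩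
  · exact Prod.ext h (huniq _ _ _ he1 (h ▸ hf1))
  · have := huniq _ _ _ he1 (h ▸ hf1.symm)
    rw [h, this] at he2
    exact lt_asymm he2 hf2
  · have := huniq _ _ _ he1.symm (h ▸ hf1)
    rw [h, this] at he2
    exact lt_asymm he2 hf2
  · exact Prod.ext (huniq _ _ _ he1.symm (h ▸ hf1.symm)) h

/-- One inequality of the Tutte–Berge formula. The map `f` labels the components of `G - S`;
its values on `S` are irrelevant. -/
lemma exists_berge_set {n k q : ℕ} (hn : n = 2 * k + q) (G : SimpleGraph (Fin n))
    (hG : ¬ ∃ N : Finset (Fin n × Fin n), PairMatching N ∧ N.card = k ∧ ∀ e ∈ N, G.Adj e.1 e.2) :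
    ∃ (S : Finset (Fin n)) (f : Fin n → ℕ),
      (∀ x y, x ∉ S → y ∉ S → G.Adj x y → f x = f y) ∧
      S.card + q + 2 ≤ (Sᶜ.image f).card := by
  classical
  obtain ⟨u, hu⟩ : ∃ u, (coneGraph G q).IsTutteViolator u := by
    by_contra! h
    obtain ⟨M, hM⟩ := SimpleGraph.tutte.2 h
    exact hG (exists_pairMatching_of_cone hn G M hM)
  unfold SimpleGraph.IsTutteViolator at hu
  set H := ((⊤ : (coneGraph G q).Subgraph).deleteVerts u).coe with hH
  have hHadj : ∀ x y, H.Adj x y ↔ (coneGraph G q).Adj x.1 y.1 := by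
    intro x y
    have hx := x.2
    have hy := y.2
    simp only [SimpleGraph.Subgraph.deleteVerts_verts, SimpleGraph.Subgraph.verts_top] at hx hy
    simp [hH, hx.2, hy.2]
  have hcard : Nat.card ((⊤ : (coneGraph G q).Subgraph).deleteVerts u).verts + u.ncard
      = n + q := by
    have h1 : ((⊤ : (coneGraph G q).Subgraph).deleteVerts u).verts = uᶜ := by
      ext; simp
    rw [Nat.card_coe_set_eq, h1, add_comm, Set.ncard_add_ncard_compl]
    simp
  have hpar := SimpleGraph.odd_ncard_oddComponents H
  -- the cone has an even number `2k + 2q` of vertices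
  have hodd : u.ncard + 2 ≤ H.oddComponents.ncard := by
    have : H.oddComponents.ncard ≠ u.ncard + 1 := by
      intro h
      rw [h, Nat.odd_iff, Nat.odd_iff] at hpar
      omega
    omega
  have hle : H.oddComponents.ncard ≤ Nat.card H.ConnectedComponent := Set.ncard_le_card _
  -- an added vertex outside `u` would make `H` connected
  have hinr : ∀ j : Fin q, (Sum.inr j : Fin n ⊕ Fin q) ∈ u := by
    intro j
    by_contra hj
    let v : ((⊤ : (coneGraph G q).Subgraph).deleteVerts u).verts := ⟨Sum.inr j, by simp [hj]⟩
    have : Subsingleton H.ConnectedComponent := by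
      have hv : ∀ w, H.Reachable v w := by
        intro w
        by_cases hvw : v = w
        · rw [hvw]
        · refine SimpleGraph.Adj.reachable ((hHadj _ _).2 ⟨fun h => hvw (Subtype.ext h), ?_⟩)
          intro a b ha
          simp [v] at ha
      refine SimpleGraph.Preconnected.subsingleton_connectedComponent ?_
      intro x y
      exact (hv x).symm.trans (hv y)
    have := Finite.card_le_one_iff_subsingleton.2 this
    omega
  let S : Finset (Fin n) := Finset.univ.filter fun a => Sum.inl a ∈ u
  have hSu : u.ncard = S.card + q := by
    have : u = ((S.disjSum (Finset.univ : Finset (Fin q)) : Finset (Fin n ⊕ Fin q)) :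
        Set (Fin n ⊕ Fin q)) := by
      ext x
      rcases x with a | j
      · simp [S]
      · simp [hinr j]
    rw [this, Set.ncard_coe_finset, Finset.card_disjSum]
    simp
  obtain ⟨φ, hφ⟩ : ∃ φ : H.ConnectedComponent → ℕ, Function.Injective φ :=
    exists_injective_nat _
  let f : Fin n → ℕ := fun a => if h : Sum.inl a ∈ u then 0 else
    φ (H.connectedComponentMk ⟨Sum.inl a, by simp [h]⟩)
  refine ⟨S, f, ?_, ?_⟩
  · intro x y hx hy hxy
    have hx' : Sum.inl x ∉ u := by simpa [S] using hx
    have hy' : Sum.inl y ∉ u := by simpa [S] using hy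
    simp only [f, hx', hy', dif_neg, not_false_eq_true]
    congr 1
    refine SimpleGraph.ConnectedComponent.sound (SimpleGraph.Adj.reachable ((hHadj _ _).2 ?_))
    refine ⟨fun h => hxy.ne (Sum.inl_injective h), fun a b ha hb => ?_⟩
    rw [← Sum.inl_injective ha, ← Sum.inl_injective hb]
    exact hxy
  · have : Set.range φ ⊆ ((Sᶜ.image f : Finset ℕ) : Set ℕ) := by
      rintro _ ⟨C, rfl⟩
      induction C using SimpleGraph.ConnectedComponent.ind with
      | h v =>
        obtain ⟨x, hx⟩ := v
        have hxu : x ∉ u := by simpa using hx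
        rcases x with a | j
        · simp only [Finset.coe_image, Set.mem_image]
          exact ⟨a, by simpa [S] using hxu, by simp [f, hxu]⟩
        · exact absurd (hinr j) hxu
    have h1 := Set.ncard_le_ncard this (Finset.finite_toSet _)
    rw [Set.ncard_coe_finset, ← Set.image_univ, Set.ncard_image_of_injective _ hφ,
      Set.ncard_univ] at h1
    omega

/-! ### Families of obstructions for several colors -/

/-- A family of sets `S i`, each with a labelling `f i` of the vertices outside `S i` by at least
`|S i| + q + 2` labels, such that any two vertices outside `S i ∪ S j` agree in one of the two
labellings. -/
structure BergeFamily {V ι : Type*} [Fintype V] [DecidableEq V] (q : ℕ) (S : ι → Finset V)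
    (f : ι → V → ℕ) : Prop where
  agree : ∀ i j, i ≠ j → ∀ x y, x ∉ S i → x ∉ S j → y ∉ S i → y ∉ S j →
    f i x = f i y ∨ f j x = f j y
  card_le : ∀ i, (S i).card + q + 2 ≤ ((S i)ᶜ.image (f i)).card

namespace BergeFamily

variable {V ι : Type*} [Fintype V] [DecidableEq V] {q : ℕ} {S : ι → Finset V} {f : ι → V → ℕ}

/-- Otherwise all vertices outside `S i ∪ S j` have the same label for `j`, and at most
`|S i| + 1` labels for `j` are in use. -/
lemma label_eq (h : BergeFamily q S f) {i j : ι} (hij : i ≠ j) (hc : (S i).card ≤ (S j).card)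
    {x y : V} (hxi : x ∉ S i) (hxj : x ∉ S j) (hyi : y ∉ S i) (hyj : y ∉ S j) :
    f i x = f i y := by
  by_contra hne
  have hsub : (S j)ᶜ.image (f j) ⊆ insert (f j x) ((S i).image (f j)) := by
    intro c hcm
    obtain ⟨z, hz, rfl⟩ := Finset.mem_image.1 hcm
    rw [Finset.mem_compl] at hz
    by_cases hzi : z ∈ S i
    · exact Finset.mem_insert_of_mem (Finset.mem_image_of_mem _ hzi)
    · have h1 := h.agree i j hij x y hxi hxj hyi hyj
      have h2 := h.agree i j hij x z hxi hxj hzi hz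
      have h3 := h.agree i j hij y z hyi hyj hzi hz
      have : f j z = f j x := by grind
      rw [this]
      exact Finset.mem_insert_self _ _
  have h1 := Finset.card_le_card hsub
  have h2 := Finset.card_insert_le (f j x) ((S i).image (f j))
  have h3 := Finset.card_image_le (s := S i) (f := f j)
  have h4 := h.card_le j
  omega

/-- At most one label for `i` occurs outside `S i ∪ S j`. -/
lemma card_image_le_one (h : BergeFamily q S f) {i j : ι} (hij : i ≠ j)
    (hc : (S i).card ≤ (S j).card) : ((S i ∪ S j)ᶜ.image (f i)).card ≤ 1 := by
  rw [Finset.card_le_one]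
  intro a ha b hb
  obtain ⟨x, hx, rfl⟩ := Finset.mem_image.1 ha
  obtain ⟨y, hy, rfl⟩ := Finset.mem_image.1 hb
  simp only [Finset.mem_compl, Finset.mem_union, not_or] at hx hy
  exact h.label_eq hij hc hx.1 hx.2 hy.1 hy.2

/-- All but at most two of the labels for `l` occur inside `S i ∩ S j`, so `(S i \ S j) ∪ S l` has
at most `|S i| - q` elements; it would contain the complement of `S j` if the three sets
covered `V`. -/
lemma exists_not_mem (h : BergeFamily q S f) {l i j : ι} (hli : l ≠ i) (hlj : l ≠ j)
    (h1 : (S l).card ≤ (S i).card) (h2 : (S i).card ≤ (S j).card) :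
    ∃ w, w ∉ S l ∧ w ∉ S i ∧ w ∉ S j := by
  by_contra! hcov
  have hsub : (S l)ᶜ.image (f l) ⊆ (S i ∩ S j).image (f l) ∪
      ((S l ∪ S i)ᶜ.image (f l) ∪ (S l ∪ S j)ᶜ.image (f l)) := by
    rw [← Finset.image_union, ← Finset.image_union]
    refine Finset.image_subset_image fun x hx => ?_
    simp only [Finset.mem_compl, Finset.mem_union, Finset.mem_inter] at hx ⊢
    tauto
  have c1 := Finset.card_le_card hsub
  have c2 := Finset.card_union_le ((S i ∩ S j).image (f l))
    ((S l ∪ S i)ᶜ.image (f l) ∪ (S l ∪ S j)ᶜ.image (f l))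
  have c3 := Finset.card_union_le ((S l ∪ S i)ᶜ.image (f l)) ((S l ∪ S j)ᶜ.image (f l))
  have c4 := h.card_image_le_one hli h1
  have c5 := h.card_image_le_one hlj (h1.trans h2)
  have c6 := Finset.card_image_le (s := S i ∩ S j) (f := f l)
  have c7 := h.card_le l
  have hsub' : (S j)ᶜ ⊆ (S i \ S j) ∪ S l := by
    intro x hx
    simp only [Finset.mem_compl, Finset.mem_union, Finset.mem_sdiff] at hx ⊢
    have := hcov x
    tauto
  have d1 := Finset.card_le_card hsub'
  have d2 := Finset.card_union_le (S i \ S j) (S l)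
  have d3 := Finset.card_sdiff_add_card_inter (S i) (S j)
  have d4 := Finset.card_image_le (s := (S j)ᶜ) (f := f j)
  have d5 := h.card_le j
  omega

/-- The vertices outside `S i` whose label for `i` does not occur outside `S i ∪ S j`. -/
def small (S : ι → Finset V) (f : ι → V → ℕ) (i j : ι) : Finset V :=
  {x | x ∉ S i ∧ ∀ w, w ∉ S i → w ∉ S j → f i w ≠ f i x}

lemma mem_small {i j : ι} {x : V} :
    x ∈ small S f i j ↔ x ∉ S i ∧ ∀ w, w ∉ S i → w ∉ S j → f i w ≠ f i x := by
  simp [small]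

lemma small_subset (i j : ι) : small S f i j ⊆ S j := by
  intro x hx
  rw [mem_small] at hx
  by_contra hxj
  exact hx.2 x hx.1 hxj rfl

lemma le_card_small (h : BergeFamily q S f) {i j : ι} (hij : i ≠ j)
    (hc : (S i).card ≤ (S j).card) : (S i).card + q + 1 ≤ (small S f i j).card := by
  have hsub : (S i)ᶜ.image (f i) ⊆
      (small S f i j).image (f i) ∪ (S i ∪ S j)ᶜ.image (f i) := by
    intro c hcm
    obtain ⟨x, hx, rfl⟩ := Finset.mem_image.1 hcm
    rw [Finset.mem_compl] at hx
    by_cases hs : x ∈ small S f i j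
    · exact Finset.mem_union_left _ (Finset.mem_image_of_mem _ hs)
    · rw [mem_small] at hs
      push Not at hs
      obtain ⟨w, hw1, hw2, hw3⟩ := hs hx
      exact Finset.mem_union_right _ (Finset.mem_image.2 ⟨w, by simp [hw1, hw2], hw3⟩)
  have c1 := Finset.card_le_card hsub
  have c2 := Finset.card_union_le ((small S f i j).image (f i)) ((S i ∪ S j)ᶜ.image (f i))
  have c3 := Finset.card_image_le (s := small S f i j) (f := f i)
  have c4 := h.card_image_le_one hij hc
  have c5 := h.card_le i
  omega

lemma disjoint_small (h : BergeFamily q S f) {l i j : ι} (hli : l ≠ i) (hlj : l ≠ j)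
    (h1 : (S l).card ≤ (S i).card) (h2 : (S i).card ≤ (S j).card) :
    Disjoint (small S f l j) (small S f i j) := by
  rw [Finset.disjoint_left]
  intro x hxl hxi
  rw [mem_small] at hxl hxi
  obtain ⟨w, hwl, hwi, hwj⟩ := h.exists_not_mem hli hlj h1 h2
  exact hxl.2 w hwl hwj (h.label_eq hli h1 hwl hwi hxl.1 hxi.1)

lemma sum_le_card (h : BergeFamily q S f) (j : ι) (T : Finset ι)
    (hT : ∀ i ∈ T, i ≠ j ∧ (S i).card ≤ (S j).card) :
    ∑ i ∈ T, ((S i).card + q + 1) ≤ (S j).card := by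
  calc ∑ i ∈ T, ((S i).card + q + 1) ≤ ∑ i ∈ T, (small S f i j).card :=
        Finset.sum_le_sum fun i hi => h.le_card_small (hT i hi).1 (hT i hi).2
    _ = (T.biUnion fun i => small S f i j).card := by
        refine (Finset.card_biUnion fun l hl i hi hli => ?_).symm
        rcases le_total (S l).card (S i).card with hle | hle
        · exact h.disjoint_small hli (hT l hl).1 hle (hT i hi).2
        · exact (h.disjoint_small hli.symm (hT i hi).1 hle (hT l hl).2).symm
    _ ≤ (S j).card :=
        Finset.card_le_card (Finset.biUnion_subset.2 fun i _ => small_subset i j)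

/-- Adding an index `a` with `|S a|` largest at least doubles the sum, by `sum_le_card`, and
adds a further `q + 1`. -/
lemma le_sum [DecidableEq ι] (h : BergeFamily q S f) (T : Finset ι) :
    (2 ^ T.card - 1) * (q + 1) ≤ ∑ i ∈ T, ((S i).card + q + 1) := by
  induction T using Finset.induction_on_max_value (fun i => (S i).card) with
  | empty => simp
  | insert a T ha hmax ih =>
    rw [Finset.card_insert_of_notMem ha, Finset.sum_insert ha]
    have h1 := h.sum_le_card a T fun i hi => ⟨fun e => ha (e ▸ hi), hmax i hi⟩
    obtain ⟨m, hm⟩ : ∃ m, 2 ^ T.card = m + 1 :=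
      ⟨2 ^ T.card - 1, (Nat.sub_add_cancel Nat.one_le_two_pow).symm⟩
    rw [hm] at ih
    have h2 : 2 ^ (T.card + 1) - 1 = 2 * m + 1 := by rw [pow_succ, hm]; omega
    rw [h2]
    simp only [Nat.add_sub_cancel] at ih
    nlinarith

end BergeFamily

/-- For every `t ≥ 2` and `k ≥ 1`, if `n ≥ 2k + ⌊(k-1)/(2^(t-1)-1)⌋`, then every
`t`-coloring of the edges of `K_n` contains a matching of size `k` using at most
`t-1` of the colors (i.e. missing at least one color). -/
theorem stmt_1 (t k n : ℕ) (ht : 2 ≤ t) (hk : 1 ≤ k)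
    (hn : 2 * k + (k - 1) / (2 ^ (t - 1) - 1) ≤ n)
    (c : Fin n → Fin n → Fin t) (hc : ∀ x y, c x y = c y x) :
    ∃ M : Finset (Fin n × Fin n), PairMatching M ∧ M.card = k ∧
      ∃ i : Fin t, ∀ e ∈ M, c e.1 e.2 ≠ i := by
  by_contra hcon
  obtain ⟨q, hq⟩ : ∃ q, n = 2 * k + q := ⟨n - 2 * k, by have := Nat.zero_le ((k - 1) / (2 ^ (t - 1) - 1)); omega⟩
  let G : Fin t → SimpleGraph (Fin n) := fun i =>
    { Adj := fun x y => x ≠ y ∧ c x y ≠ i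
      symm := ⟨fun x y h => ⟨h.1.symm, hc x y ▸ h.2⟩⟩
      loopless := ⟨fun _ h => h.1 rfl⟩ }
  have hG : ∀ i, ¬ ∃ N : Finset (Fin n × Fin n), PairMatching N ∧ N.card = k ∧
      ∀ e ∈ N, (G i).Adj e.1 e.2 := fun i ⟨N, h1, h2, h3⟩ =>
    hcon ⟨N, h1, h2, i, fun e he => (h3 e he).2⟩
  choose S f hf hS using fun i => exists_berge_set hq (G i) (hG i)
  have hB : BergeFamily q S f := by
    refine ⟨fun i j hij x y hxi hxj hyi hyj => ?_, hS⟩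
    by_cases hxy : x = y
    · exact Or.inl (by rw [hxy])
    by_cases hci : c x y = i
    · exact Or.inr (hf j x y hxj hyj ⟨hxy, hci ▸ hij⟩)
    · exact Or.inl (hf i x y hxi hyi ⟨hxy, hci⟩)
  obtain ⟨m, -, hm⟩ := Finset.exists_max_image (Finset.univ : Finset (Fin t))
    (fun i => (S i).card) ⟨⟨0, by omega⟩, Finset.mem_univ _⟩
  have h1 := hB.le_sum (Finset.univ.erase m)
  have h2 := hB.sum_le_card m (Finset.univ.erase m) fun i hi =>
    ⟨Finset.ne_of_mem_erase hi, hm i (Finset.mem_univ i)⟩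
  rw [Finset.card_erase_of_mem (Finset.mem_univ m), Finset.card_univ, Fintype.card_fin] at h1
  have h3 := Finset.card_image_le (s := (S m)ᶜ) (f := f m)
  have h4 := Finset.card_compl_add_card (S m)
  rw [Fintype.card_fin] at h4
  have h5 := hS m
  have hpos : 0 < 2 ^ (t - 1) - 1 := by
    have : 2 ^ 1 ≤ 2 ^ (t - 1) := Nat.pow_le_pow_right (by norm_num) (by omega)
    omega
  have h6 : (k - 1) / (2 ^ (t - 1) - 1) < q + 1 := by omega
  rw [Nat.div_lt_iff_lt_mul hpos, mul_comm] at h6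
  omega
end

section
/- Every t-coloring of the edges of the complete graph on 2^t - 2 vertices admits a perfect matching that misses at least one color. -/
open Finset

/-- The pair `(S, r)` witnesses that color `i` contains a complete multipartite graph with at least
`|S| + 2` parts on the complement of `S`. The parts are the fibers of the labelling `r`, whose
values on `S` are irrelevant. -/
def IsBarrier {V κ ι : Type} [Fintype V] [DecidableEq V] [DecidableEq ι]
    (c : V → V → κ) (i : κ) (S : Finset V) (r : V → ι) : Prop :=
  (∀ x ∉ S, ∀ y ∉ S, r x ≠ r y → c x y = i) ∧ #S + 2 ≤ #(Sᶜ.image r)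

/-- The edges of color different from `i`. -/
def avoidGraph {V κ : Type} (c : V → V → κ) (hc : ∀ x y, c x y = c y x) (i : κ) :
    SimpleGraph V where
  Adj x y := x ≠ y ∧ c x y ≠ i
  symm := ⟨fun x y h => ⟨h.1.symm, by rw [hc]; exact h.2⟩⟩
  loopless := ⟨fun _ h => h.1 rfl⟩

open Classical in
/-- Tutte's theorem for the edges avoiding color `i`. The surplus of two odd components over the
size of the removed set, rather than one, comes from parity. -/
lemma exists_isBarrier {V κ : Type} [Fintype V]
    (hV : Even (Fintype.card V)) (c : V → V → κ) (hc : ∀ x y, c x y = c y x) (i : κ)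
    (h : ¬ ∃ M : (avoidGraph c hc i).Subgraph, M.IsPerfectMatching) :
    ∃ (S : Finset V) (ι : Type) (r : V → ι), IsBarrier c i S r := by
  rw [SimpleGraph.tutte] at h
  push Not at h
  obtain ⟨u, hu⟩ := h
  unfold SimpleGraph.IsTutteViolator at hu
  set H := ((⊤ : (avoidGraph c hc i).Subgraph).deleteVerts u).coe with hH
  have hmem : ∀ v, v ∉ u → v ∈ ((⊤ : (avoidGraph c hc i).Subgraph).deleteVerts u).verts := by
    intro v hv
    simp [hv]
  have hodd := H.odd_ncard_oddComponents
  have hcard : Nat.card ((⊤ : (avoidGraph c hc i).Subgraph).deleteVerts u).verts + u.ncard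
      = Fintype.card V := by
    have := Set.ncard_add_ncard_compl u
    rw [Nat.card_eq_fintype_card] at this
    rw [Nat.card_coe_set_eq, ← this, add_comm]
    congr 2
    ext v
    simp
  have hge : u.ncard + 2 ≤ H.oddComponents.ncard := by
    by_contra hlt
    have heq : H.oddComponents.ncard = u.ncard + 1 := by omega
    rw [heq] at hodd
    rw [← hcard, Nat.even_iff] at hV
    rw [Nat.odd_iff, Nat.odd_iff] at hodd
    omega
  refine ⟨u.toFinset, Option H.ConnectedComponent,
    fun v => if hv : v ∉ u then some (H.connectedComponentMk ⟨v, hmem v hv⟩) else none, ?_, ?_⟩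
  · intro x hx y hy hne
    simp only [Set.mem_toFinset] at hx hy
    simp only [hx, hy, not_false_eq_true, dite_true, ne_eq, Option.some.injEq] at hne
    by_contra hcol
    apply hne
    by_cases hxy : x = y
    · subst hxy; rfl
    apply SimpleGraph.ConnectedComponent.sound
    apply SimpleGraph.Adj.reachable
    have hadj : (avoidGraph c hc i).Adj x y := ⟨hxy, hcol⟩
    simp [hH, hx, hy, hadj]
  · have h1 : #u.toFinset = u.ncard := (Set.ncard_eq_toFinset_card' u).symm
    rw [h1]
    refine hge.trans ?_
    rw [Set.ncard_eq_toFinset_card', ← Finset.card_map Function.Embedding.some]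
    apply Finset.card_le_card
    intro k hk
    simp only [Finset.mem_map, Function.Embedding.some_apply] at hk
    obtain ⟨C, -, rfl⟩ := hk
    induction C using SimpleGraph.ConnectedComponent.ind with
    | _ v =>
    have hv : v.1 ∉ u := by
      have := v.2
      simp at this
      exact this
    simp only [Finset.mem_image, Finset.mem_compl, Set.mem_toFinset]
    exact ⟨v.1, hv, by simp [hv]⟩

/-- The vertices outside `S` and outside the part labelled `a`. -/
def rest {V ι : Type} [Fintype V] [DecidableEq V] [DecidableEq ι]
    (S : Finset V) (r : V → ι) (a : ι) : Finset V :=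
  {v | v ∉ S ∧ r v ≠ a}

section

variable {V κ ι ι' : Type} [Fintype V] [DecidableEq V] [DecidableEq ι] [DecidableEq ι']
  {c : V → V → κ} {i j : κ} {S T : Finset V} {r : V → ι} {q : V → ι'}

lemma IsBarrier.card_lt_card_rest (h : IsBarrier c i S r) (a : ι) : #S < #(rest S r a) := by
  have h1 : (Sᶜ.image r).erase a ⊆ (rest S r a).image r := by
    intro k hk
    simp only [rest, mem_erase, mem_image, mem_compl, mem_filter, mem_univ, true_and] at hk ⊢
    obtain ⟨hk, v, hv, rfl⟩ := hk
    exact ⟨v, ⟨hv, hk⟩, rfl⟩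
  have h2 := (card_le_card h1).trans card_image_le
  have h3 := pred_card_le_card_erase (s := Sᶜ.image r) (a := a)
  have := h.2
  omega

/-- Outside `S ∪ T`, one of the two labellings is constant. -/
lemma IsBarrier.constant_or_constant (h : IsBarrier c i S r) (h' : IsBarrier c j T q)
    (hij : i ≠ j) {x : V} (hxS : x ∉ S) (hxT : x ∉ T) :
    (∀ v, v ∉ S → v ∉ T → r v = r x) ∨ (∀ v, v ∉ S → v ∉ T → q v = q x) := by
  have key : ∀ u v, u ∉ S → u ∉ T → v ∉ S → v ∉ T → r u = r v ∨ q u = q v := by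
    intro u v hu hu' hv hv'
    by_contra! hne
    exact hij ((h.1 u hu v hv hne.1).symm.trans (h'.1 u hu' v hv' hne.2))
  by_contra! hcon
  obtain ⟨⟨u, hu, hu', hru⟩, v, hv, hv', hqv⟩ := hcon
  have h1 := key u x hu hu' hxS hxT
  have h2 := key v x hv hv' hxS hxT
  have h3 := key u v hu hu' hv hv'
  grind

/-- The part labelled `a` being a largest one, the other parts of the smaller barrier lie inside
the removed set of the larger barrier. -/
lemma IsBarrier.subset_of_card_le (h : IsBarrier c i S r) (h' : IsBarrier c j T q)
    (hij : i ≠ j) (hST : #S ≤ #T) {a : ι}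
    (hmax : ∀ k, #{v | v ∉ S ∧ r v = k} ≤ #{v | v ∉ S ∧ r v = a}) :
    rest S r a ⊆ T := by
  intro x hx
  by_contra hxT
  simp only [rest, mem_filter, mem_univ, true_and] at hx
  obtain ⟨hxS, hxa⟩ := hx
  rcases h.constant_or_constant h' hij hxS hxT with hr | hq
  · -- Outside `S` and the part of `x`, everything lies in `T`, including the largest part.
    have h1 : Tᶜ ⊆ S ∪ ({v | v ∉ S ∧ r v = r x} : Finset V) := by
      intro v hv
      have := hr v
      simp only [mem_compl, mem_union, mem_filter, mem_univ, true_and] at hv ⊢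
      tauto
    have h2 : #T + 2 ≤ #S + #{v | v ∉ S ∧ r v = r x} :=
      h'.2.trans (card_image_le.trans ((card_le_card h1).trans (card_union_le _ _)))
    have h3 := hmax (r x)
    let D : Finset V := {v | v ∉ S ∧ r v ≠ a ∧ r v ≠ r x}
    have h4 : #S ≤ #D := by
      have h5 : ((Sᶜ.image r).erase a).erase (r x) ⊆ D.image r := by
        intro k hk
        simp only [D, mem_erase, mem_image, mem_compl, mem_filter, mem_univ, true_and] at hk ⊢
        obtain ⟨hk, hk', v, hv, rfl⟩ := hk
        exact ⟨v, ⟨hv, hk', hk⟩, rfl⟩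
      have h6 := (card_le_card h5).trans card_image_le
      have h7 := pred_card_le_card_erase (s := Sᶜ.image r) (a := a)
      have h8 := pred_card_le_card_erase (s := (Sᶜ.image r).erase a) (a := r x)
      have := h.2
      omega
    have hdisj : Disjoint ({v | v ∉ S ∧ r v = a} : Finset V) D := by
      rw [Finset.disjoint_left]
      intro v hv hv'
      simp only [D, mem_filter, mem_univ, true_and] at hv hv'
      exact hv'.2.1 hv.2
    have h9 : ({v | v ∉ S ∧ r v = a} : Finset V) ∪ D ⊆ T := by
      intro v hv
      by_contra hvT
      simp only [D, mem_union, mem_filter, mem_univ, true_and] at hv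
      rcases hv with hv | hv
      · exact hxa ((hr v hv.1 hvT).symm.trans hv.2)
      · exact hv.2.2 (hr v hv.1 hvT)
    have h10 := card_le_card h9
    rw [card_union_of_disjoint hdisj] at h10
    omega
  · -- Here `S` contains all parts but one of the other barrier, so it would be larger than `T`.
    have h1 : rest T q (q x) ⊆ S := by
      intro v hv
      by_contra hvS
      simp only [rest, mem_filter, mem_univ, true_and] at hv
      exact hv.2 (hq v hvS hv.1)
    have h2 := card_le_card h1
    have h3 := h'.card_lt_card_rest (q x)
    omega

end

lemma two_pow_le_card_biUnion {V κ : Type} [DecidableEq V] [DecidableEq κ]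
    (S B : κ → Finset V) (hdisj : ∀ i, Disjoint (B i) (S i)) (hcard : ∀ i, #(S i) < #(B i))
    (hsub : ∀ i j, i ≠ j → #(S i) ≤ #(S j) → B i ⊆ S j) (I : Finset κ) :
    2 ^ #I ≤ #(I.biUnion B) + 1 := by
  induction I using Finset.induction_on_max_value (fun i => #(S i)) with
  | empty => simp
  | insert a I ha hle ih =>
    have h1 : I.biUnion B ⊆ S a := by
      rw [biUnion_subset]
      intro i hi
      exact hsub i a (fun h => ha (h ▸ hi)) (hle i hi)
    have h2 := card_le_card h1
    have h3 := hcard a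
    rw [biUnion_insert, card_union_of_disjoint ((hdisj a).mono_right h1),
      card_insert_of_notMem ha, pow_succ]
    omega

/-- Not every color class meets every perfect matching. -/
lemma exists_isPerfectMatching {V : Type} [Fintype V] {t : ℕ} (hV : Even (Fintype.card V))
    (hlt : Fintype.card V + 1 < 2 ^ t) (c : V → V → Fin t) (hc : ∀ x y, c x y = c y x) :
    ∃ i, ∃ M : (avoidGraph c hc i).Subgraph, M.IsPerfectMatching := by
  classical
  by_contra! hno
  have hbar : ∀ i, ∃ (S : Finset V) (ι : Type) (r : V → ι), IsBarrier c i S r := fun i =>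
    exists_isBarrier hV c hc i (by push Not; exact hno i)
  choose S ι r hb using hbar
  have hlargest : ∀ i, ∃ a, ∀ k, #{v | v ∉ S i ∧ r i v = k} ≤ #{v | v ∉ S i ∧ r i v = a} := by
    intro i
    have hne : ((S i)ᶜ.image (r i)).Nonempty := by
      rw [← card_pos]
      have := (hb i).2
      omega
    obtain ⟨a, -, ha⟩ := exists_max_image _ (fun k => #{v | v ∉ S i ∧ r i v = k}) hne
    refine ⟨a, fun k => ?_⟩
    by_cases hk : k ∈ (S i)ᶜ.image (r i)
    · exact ha k hk
    · -- A label that is not attained outside `S i` has an empty part.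
      have : ({v | v ∉ S i ∧ r i v = k} : Finset V) = ∅ := by
        apply filter_eq_empty_iff.2
        rintro v - ⟨hv, hvk⟩
        exact hk (mem_image.2 ⟨v, by simpa using hv, hvk⟩)
      simp [this]
  choose a ha using hlargest
  have h := two_pow_le_card_biUnion S (fun i => rest (S i) (r i) (a i))
    (fun i => by
      rw [Finset.disjoint_left]
      intro v hv
      simp only [rest, mem_filter, mem_univ, true_and] at hv
      exact hv.1)
    (fun i => (hb i).card_lt_card_rest (a i))
    (fun i j hij hle => (hb i).subset_of_card_le (hb j) hij hle (ha i)) univ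
  have h' := card_le_univ (univ.biUnion fun i => rest (S i) (r i) (a i))
  rw [card_univ, Fintype.card_fin] at h
  omega

lemma PairMatching.two_mul_card {V : Type} [Fintype V] [DecidableEq V] {M : Finset (V × V)}
    (hM : PairMatching M) (hcov : ∀ v, ∃ e ∈ M, v = e.1 ∨ v = e.2) :
    2 * #M = Fintype.card V := by
  have h1 : M.biUnion (fun e => {e.1, e.2}) = univ := by
    ext v
    simpa using hcov v
  rw [← card_univ, ← h1, card_biUnion]
  · rw [sum_congr rfl (fun e he => card_pair (hM.1 e he))]
    simp [mul_comm]
  · intro e he f hf hef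
    have := hM.2 e he f hf hef
    rw [Function.onFun, Finset.disjoint_left]
    grind

/-- Every `t`-coloring of the edges of the complete graph on `2^t - 2` vertices
admits a perfect matching (a set of `2^(t-1) - 1` disjoint edges covering all
vertices) that misses at least one color. -/
theorem stmt_5 (t : ℕ) (ht : 2 ≤ t)
    (c : Fin (2 ^ t - 2) → Fin (2 ^ t - 2) → Fin t) (hc : ∀ x y, c x y = c y x) :
    ∃ M : Finset (Fin (2 ^ t - 2) × Fin (2 ^ t - 2)), PairMatching M ∧
      M.card = 2 ^ (t - 1) - 1 ∧
      (∀ v : Fin (2 ^ t - 2), ∃ e ∈ M, v = e.1 ∨ v = e.2) ∧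
      ∃ i : Fin t, ∀ e ∈ M, c e.1 e.2 ≠ i := by
  classical
  obtain ⟨s, rfl⟩ : ∃ s, t = s + 1 := ⟨t - 1, by omega⟩
  have hpos : 0 < 2 ^ s := by positivity
  have hpow : 2 ^ (s + 1) = 2 * 2 ^ s := by ring
  obtain ⟨i, M, hM⟩ := exists_isPerfectMatching
    (by rw [Fintype.card_fin]; exact ⟨2 ^ s - 1, by omega⟩)
    (by rw [Fintype.card_fin]; omega) c hc
  rw [SimpleGraph.Subgraph.isPerfectMatching_iff] at hM
  have huniq : ∀ {u v w}, M.Adj u v → M.Adj u w → v = w := fun hv hw => (hM _).unique hv hw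
  -- Each edge is represented by its increasing pair of endpoints.
  let N : Finset (Fin (2 ^ (s + 1) - 2) × Fin (2 ^ (s + 1) - 2)) := {e | M.Adj e.1 e.2 ∧ e.1 < e.2}
  have hN : ∀ e, e ∈ N ↔ M.Adj e.1 e.2 ∧ e.1 < e.2 := fun e => by simp [N]
  have hpair : PairMatching N := by
    refine ⟨fun e he => ((hN e).1 he).2.ne, fun e he f hf hef => ?_⟩
    obtain ⟨e1, e2⟩ := e
    obtain ⟨f1, f2⟩ := f
    obtain ⟨hea, hel⟩ := (hN _).1 he
    obtain ⟨hfa, hfl⟩ := (hN _).1 hf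
    dsimp only at *
    refine ⟨?_, ?_, ?_, ?_⟩
    · rintro rfl
      exact hef (by rw [huniq hea hfa])
    · rintro rfl
      have := huniq hea hfa.symm
      subst this
      exact lt_asymm hel hfl
    · rintro rfl
      have := huniq hea.symm hfa
      subst this
      exact lt_asymm hel hfl
    · rintro rfl
      exact hef (by rw [huniq hea.symm hfa.symm])
  have hcov : ∀ v, ∃ e ∈ N, v = e.1 ∨ v = e.2 := by
    intro v
    obtain ⟨w, hw, -⟩ := hM v
    rcases lt_or_gt_of_ne hw.ne with hlt | hlt
    · exact ⟨(v, w), (hN _).2 ⟨hw, hlt⟩, Or.inl rfl⟩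
    · exact ⟨(w, v), (hN _).2 ⟨hw.symm, hlt⟩, Or.inr rfl⟩
  refine ⟨N, hpair, ?_, hcov, i, fun e he => ((hN e).1 he).1.adj_sub.2⟩
  have h2 := hpair.two_mul_card hcov
  rw [Fintype.card_fin] at h2
  rw [Nat.add_sub_cancel]
  omega
end

section
/- In any 3-coloring of the edges of K_n with n ≥ 2k + ⌊(k-1)/3⌋, there exist two vertex-disjoint matchings M_1, M_2, each monochromatic (possibly in the same color), with |M_1| + |M_2| ≥ k. -/
/-! ### The Tutte–Berge formula -/

/-- The join of `G` with a complete graph on `m` new vertices. -/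
def addUniversal {n : ℕ} (G : SimpleGraph (Fin n)) (m : ℕ) : SimpleGraph (Fin m ⊕ Fin n) where
  Adj x y := x ≠ y ∧ ∀ u v, x = Sum.inr u → y = Sum.inr v → G.Adj u v
  symm := ⟨fun _ _ h => ⟨h.1.symm, fun u v hu hv => (h.2 v u hv hu).symm⟩⟩
  loopless := ⟨fun _ h => h.1 rfl⟩

/-- A perfect matching of the join with `m` new vertices loses at most `m` vertices when it is
restricted to the old ones. -/
lemma exists_pairMatching_of_perfect {n : ℕ} (G : SimpleGraph (Fin n)) (k m : ℕ)
    (hm : 2 * k + m = n) (M : (addUniversal G m).Subgraph) (hM : M.IsPerfectMatching) :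
    ∃ E : Finset (Fin n × Fin n), PairMatching E ∧ (∀ e ∈ E, G.Adj e.1 e.2) ∧ k ≤ E.card := by
  classical
  rw [SimpleGraph.Subgraph.isPerfectMatching_iff] at hM
  choose p hp hpu using hM
  have huniq : ∀ a b c, M.Adj a b → M.Adj a c → b = c := fun a b c h1 h2 =>
    (hpu a b h1).trans (hpu a c h2).symm
  -- each matched pair of old vertices is listed once, in increasing order
  let E : Finset (Fin n × Fin n) :=
    Finset.univ.filter fun e => e.1 < e.2 ∧ M.Adj (Sum.inr e.1) (Sum.inr e.2)
  have hE : ∀ e, e ∈ E ↔ e.1 < e.2 ∧ M.Adj (Sum.inr e.1) (Sum.inr e.2) := by simp [E]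
  refine ⟨E, ⟨fun e he => ((hE e).1 he).1.ne, ?_⟩, ?_, ?_⟩
  · rintro ⟨a, b⟩ he ⟨a', b'⟩ hf hne
    obtain ⟨h1, h2⟩ := (hE _).1 he
    obtain ⟨h3, h4⟩ := (hE _).1 hf
    simp only at h1 h2 h3 h4 ⊢
    refine ⟨?_, ?_, ?_, ?_⟩
    · rintro rfl
      have := Sum.inr_injective (huniq _ _ _ h2 h4)
      exact hne (by rw [this])
    · rintro rfl
      have := Sum.inr_injective (huniq _ _ _ h2 h4.symm)
      subst this
      exact absurd h1 h3.asymm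
    · rintro rfl
      have := Sum.inr_injective (huniq _ _ _ h2.symm h4)
      subst this
      exact absurd h1 h3.asymm
    · rintro rfl
      have := Sum.inr_injective (huniq _ _ _ h2.symm h4.symm)
      exact hne (by rw [this])
  · intro e he
    exact (M.adj_sub ((hE e).1 he).2).2 _ _ rfl rfl
  · have hcov : (Finset.univ : Finset (Fin n)) ⊆ (E.image Prod.fst ∪ E.image Prod.snd) ∪
        Finset.univ.filter (fun v => ∃ a, p (Sum.inr v) = Sum.inl a) := by
      intro v _
      have hv := hp (Sum.inr v)
      rcases h : p (Sum.inr v) with a | w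
      · simp [h]
      · rw [h] at hv
        have hne : v ≠ w := fun hvw => (M.adj_sub hv).1 (by rw [hvw])
        rcases lt_or_gt_of_ne hne with hlt | hlt
        · have : (v, w) ∈ E := (hE _).2 ⟨hlt, hv⟩
          simp only [Finset.mem_union, Finset.mem_image]
          exact Or.inl (Or.inl ⟨_, this, rfl⟩)
        · have : (w, v) ∈ E := (hE _).2 ⟨hlt, hv.symm⟩
          simp only [Finset.mem_union, Finset.mem_image]
          exact Or.inl (Or.inr ⟨_, this, rfl⟩)
    have hB : (Finset.univ.filter
        (fun v : Fin n => ∃ a, p (Sum.inr v) = Sum.inl a)).card ≤ m := by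
      have hsub : (Finset.univ.filter (fun v : Fin n => ∃ a, p (Sum.inr v) = Sum.inl a)).image
          (fun v => p (Sum.inr v)) ⊆ (Finset.univ : Finset (Fin m)).image Sum.inl := by
        intro x hx
        simp only [Finset.mem_image, Finset.mem_filter, Finset.mem_univ, true_and] at hx ⊢
        obtain ⟨v, ⟨a, ha⟩, rfl⟩ := hx
        exact ⟨a, ha.symm⟩
      have hinj : Function.Injective (fun v : Fin n => p (Sum.inr v)) := by
        intro v w hvw
        have h1 := hp (Sum.inr v)
        have h2 := hp (Sum.inr w)
        simp only at hvw
        rw [← hvw] at h2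
        exact Sum.inr_injective (huniq _ _ _ h1.symm h2.symm)
      have := Finset.card_le_card hsub
      rw [Finset.card_image_of_injective _ hinj,
        Finset.card_image_of_injective _ Sum.inl_injective] at this
      simpa using this
    have h1 := Finset.card_le_card hcov
    have h2 := Finset.card_union_le (E.image Prod.fst ∪ E.image Prod.snd)
      (Finset.univ.filter (fun v => ∃ a, p (Sum.inr v) = Sum.inl a))
    have h3 := Finset.card_union_le (E.image Prod.fst) (E.image Prod.snd)
    have h4 : (E.image Prod.fst).card ≤ E.card := Finset.card_image_le
    have h5 : (E.image Prod.snd).card ≤ E.card := Finset.card_image_le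
    simp only [Finset.card_univ, Fintype.card_fin] at h1
    omega

/-- The nontrivial direction of the Tutte–Berge formula: a graph on `2 * k + m` vertices has a
matching of size `k`, or some vertex set `X` whose deletion leaves at least `|X| + m + 2`
components. The components are the fibres of `f` on the complement of `X`. -/
lemma berge {n : ℕ} (G : SimpleGraph (Fin n)) (k m : ℕ) (hm : 2 * k + m = n)
    (hno : ¬ ∃ E : Finset (Fin n × Fin n),
      PairMatching E ∧ (∀ e ∈ E, G.Adj e.1 e.2) ∧ k ≤ E.card) :
    ∃ (T : Type) (X : Set (Fin n)) (f : Fin n → T),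
      (∀ u v, u ∉ X → v ∉ X → G.Adj u v → f u = f v) ∧
      X.ncard + m + 2 ≤ (f '' Xᶜ).ncard := by
  classical
  set H := addUniversal G m with hH
  have hnm : ¬ ∃ M : H.Subgraph, M.IsPerfectMatching := fun ⟨M, hM⟩ =>
    hno (exists_pairMatching_of_perfect G k m hm M hM)
  rw [SimpleGraph.tutte] at hnm
  push Not at hnm
  obtain ⟨U, hU⟩ := hnm
  unfold SimpleGraph.IsTutteViolator at hU
  set K := ((⊤ : H.Subgraph).deleteVerts U).coe with hK
  have hmemV : ∀ x, x ∈ ((⊤ : H.Subgraph).deleteVerts U).verts ↔ x ∉ U := by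
    intro x; simp
  -- the number of odd components has the parity of `|U|`
  have hpar : U.ncard + 2 ≤ K.oddComponents.ncard := by
    have h1 := K.odd_ncard_oddComponents
    have h2 : Nat.card ((⊤ : H.Subgraph).deleteVerts U).verts + U.ncard = 2 * (k + m) := by
      have h3 : ((⊤ : H.Subgraph).deleteVerts U).verts = Uᶜ := by
        ext x; simp
      rw [h3, Nat.card_coe_set_eq, add_comm, Set.ncard_add_ncard_compl, Nat.card_eq_fintype_card,
        Fintype.card_sum, Fintype.card_fin, Fintype.card_fin]
      omega
    rw [Nat.odd_iff, Nat.odd_iff] at h1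
    omega
  have hinl : ∀ a : Fin m, Sum.inl a ∈ U := by
    intro a
    by_contra ha
    have hsub : K.oddComponents ⊆ {K.connectedComponentMk ⟨Sum.inl a, (hmemV _).2 ha⟩} := by
      intro C _
      induction C using SimpleGraph.ConnectedComponent.ind with
      | _ v =>
        rw [Set.mem_singleton_iff]
        by_cases hv : v = ⟨Sum.inl a, (hmemV _).2 ha⟩
        · rw [hv]
        · refine SimpleGraph.ConnectedComponent.sound (SimpleGraph.Adj.reachable ?_)
          have hv' : v.1 ≠ Sum.inl a := fun h => hv (Subtype.ext h)
          have hadj : H.Adj v.1 (Sum.inl a) := ⟨hv', fun _ _ _ h => by cases h⟩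
          rw [hK, SimpleGraph.Subgraph.coe_adj, SimpleGraph.Subgraph.deleteVerts_adj]
          exact ⟨trivial, (hmemV _).1 v.2, trivial, ha, hadj⟩
    have := Set.ncard_le_ncard hsub
    rw [Set.ncard_singleton] at this
    omega
  -- the value of `f` on `X` is irrelevant
  let f : Fin n → Option K.ConnectedComponent := fun v =>
    if h : Sum.inr v ∈ U then none else some (K.connectedComponentMk ⟨Sum.inr v, (hmemV _).2 h⟩)
  have hf : ∀ v (h : Sum.inr v ∉ U),
      f v = some (K.connectedComponentMk ⟨Sum.inr v, (hmemV _).2 h⟩) := fun v h => dif_neg h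
  refine ⟨_, {v | Sum.inr v ∈ U}, f, ?_, ?_⟩
  · intro u v hu hv huv
    rw [hf u hu, hf v hv]
    refine congrArg some (SimpleGraph.ConnectedComponent.sound (SimpleGraph.Adj.reachable ?_))
    rw [hK, SimpleGraph.Subgraph.coe_adj, SimpleGraph.Subgraph.deleteVerts_adj]
    refine ⟨trivial, hu, trivial, hv, fun h => huv.ne (Sum.inr_injective h), ?_⟩
    intro u' v' h1 h2
    rw [← Sum.inr_injective h1, ← Sum.inr_injective h2]
    exact huv
  · have hUcard : U.ncard = {v : Fin n | Sum.inr v ∈ U}.ncard + m := by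
      have hUeq : U = Sum.inl '' (Set.univ : Set (Fin m)) ∪
          Sum.inr '' {v : Fin n | Sum.inr v ∈ U} := by
        ext x
        rcases x with a | v
        · simp [hinl a]
        · simp
      have hdisj : Disjoint (Sum.inl '' (Set.univ : Set (Fin m)))
          (Sum.inr '' {v : Fin n | Sum.inr v ∈ U}) := by
        rw [Set.disjoint_left]
        rintro _ ⟨a, _, rfl⟩ ⟨v, _, h⟩
        cases h
      conv_lhs => rw [hUeq]
      rw [Set.ncard_union_eq hdisj, Set.ncard_image_of_injective _ Sum.inl_injective,
        Set.ncard_image_of_injective _ Sum.inr_injective, Set.ncard_univ, Nat.card_eq_fintype_card,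
        Fintype.card_fin, add_comm]
    have hsub : some '' K.oddComponents ⊆ f '' {v | Sum.inr v ∈ U}ᶜ := by
      rintro _ ⟨C, _, rfl⟩
      induction C using SimpleGraph.ConnectedComponent.ind with
      | _ v =>
        obtain ⟨x, hx⟩ := v
        have hxU := (hmemV x).1 hx
        rcases x with a | v
        · exact absurd (hinl a) hxU
        · exact ⟨v, hxU, hf v hxU⟩
    have h1 := Set.ncard_le_ncard hsub
    rw [Set.ncard_image_of_injective _ (Option.some_injective _)] at h1
    omega

/-! ### Partitions for different colours -/

/-- Parts of a partition that do not meet `(X ∪ S)ᶜ` lie inside `S`. -/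
lemma ncard_parts_le {n : ℕ} {T : Type} (f : Fin n → T) (X S : Set (Fin n)) :
    (f '' Xᶜ).ncard ≤ (S \ X).ncard + (f '' (X ∪ S)ᶜ).ncard := by
  have hsub : f '' Xᶜ ⊆ f '' (S \ X) ∪ f '' (X ∪ S)ᶜ := by
    rintro _ ⟨v, hv, rfl⟩
    by_cases h : v ∈ S
    · exact Or.inl ⟨v, ⟨h, hv⟩, rfl⟩
    · exact Or.inr ⟨v, by simp_all, rfl⟩
  calc (f '' Xᶜ).ncard ≤ (f '' (S \ X) ∪ f '' (X ∪ S)ᶜ).ncard :=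
        Set.ncard_le_ncard hsub (Set.toFinite _)
    _ ≤ _ := Set.ncard_union_le _ _
    _ ≤ _ := Nat.add_le_add_right (Set.ncard_image_le (Set.toFinite _)) _

lemma ncard_image_le_one {n : ℕ} {T : Type} {f : Fin n → T} {S : Set (Fin n)}
    (h : ∀ u ∈ S, ∀ v ∈ S, f u = f v) : (f '' S).ncard ≤ 1 := by
  rw [Set.ncard_le_one_iff (Set.toFinite _)]
  rintro _ _ ⟨u, hu, rfl⟩ ⟨v, hv, rfl⟩
  exact h u hu v hv

/-- If no pair of points of `S` is separated by both `f` and `g`, then one of `f`, `g` is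
constant on `S`. -/
lemma trivial_or_trivial {n : ℕ} {T T' : Type} (f : Fin n → T) (g : Fin n → T') (S : Set (Fin n))
    (h : ∀ u ∈ S, ∀ v ∈ S, f u = f v ∨ g u = g v) :
    (∀ u ∈ S, ∀ v ∈ S, f u = f v) ∨ (∀ u ∈ S, ∀ v ∈ S, g u = g v) := by
  by_contra! hc
  obtain ⟨⟨u, hu, v, hv, huv⟩, w, hw, z, hz, hwz⟩ := hc
  -- `g` identifies `u, v` and `f` identifies `w, z`; one of `u, v` and one of `w, z` disagree
  have h1 := h u hu v hv
  have h2 := h w hw z hz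
  have h3 := h u hu w hw
  have h4 := h u hu z hz
  have h5 := h v hv w hw
  have h6 := h v hv z hz
  grind

/-- The count for a transitive tournament `1 → 2 → 3`, where `i → j` means that the `i`-th
partition has at most one part meeting the complement of `X i ∪ X j`. -/
lemma three_mul_le {n m : ℕ} {T₁ T₂ : Type} (X₁ X₂ X₃ : Set (Fin n))
    (f₁ : Fin n → T₁) (f₂ : Fin n → T₂)
    (h₁ : X₁.ncard + m + 2 ≤ (f₁ '' X₁ᶜ).ncard) (h₂ : X₂.ncard + m + 2 ≤ (f₂ '' X₂ᶜ).ncard)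
    (h₁₂ : ∀ u ∈ (X₁ ∪ X₂)ᶜ, ∀ v ∈ (X₁ ∪ X₂)ᶜ, f₁ u = f₁ v)
    (h₁₃ : ∀ u ∈ (X₁ ∪ X₃)ᶜ, ∀ v ∈ (X₁ ∪ X₃)ᶜ, f₁ u = f₁ v)
    (h₂₃ : ∀ u ∈ (X₂ ∪ X₃)ᶜ, ∀ v ∈ (X₂ ∪ X₃)ᶜ, f₂ u = f₂ v) :
    3 * (m + 1) ≤ X₃.ncard := by
  have a := ncard_parts_le f₁ X₁ X₂
  have b := ncard_parts_le f₂ X₂ X₃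
  have c := ncard_parts_le f₁ X₁ (X₂ ∩ X₃)
  have a1 := ncard_image_le_one h₁₂
  have a2 : (X₂ \ X₁).ncard ≤ X₂.ncard := Set.ncard_le_ncard Set.sdiff_subset
  have b1 := ncard_image_le_one h₂₃
  have c2 : ((X₂ ∩ X₃) \ X₁).ncard ≤ (X₂ ∩ X₃).ncard := Set.ncard_le_ncard Set.sdiff_subset
  have d : (X₂ ∩ X₃).ncard + (X₃ \ X₂).ncard = X₃.ncard := by
    rw [Set.inter_comm, Set.ncard_inter_add_ncard_sdiff_eq_ncard]
  have hsplit : (X₁ ∪ X₂ ∩ X₃)ᶜ = (X₁ ∪ X₂)ᶜ ∪ (X₁ ∪ X₃)ᶜ := by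
    ext v; simp only [Set.mem_compl_iff, Set.mem_union, Set.mem_inter_iff]; tauto
  by_cases hw : ∃ w, w ∉ X₁ ∧ w ∉ X₂ ∧ w ∉ X₃
  · -- the exceptional parts for `X₂` and for `X₃` both contain `w`, so they coincide
    obtain ⟨w, hw1, hw2, hw3⟩ := hw
    have hc : ∀ u ∈ (X₁ ∪ X₂ ∩ X₃)ᶜ, f₁ u = f₁ w := by
      intro u hu
      rw [hsplit] at hu
      rcases hu with hu | hu
      · exact h₁₂ u hu w (by simp [hw1, hw2])
      · exact h₁₃ u hu w (by simp [hw1, hw3])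
    have c1 := ncard_image_le_one fun u hu v hv => (hc u hu).trans (hc v hv).symm
    omega
  · have c1 : (f₁ '' (X₁ ∪ X₂ ∩ X₃)ᶜ).ncard ≤ 2 := by
      rw [hsplit, Set.image_union]
      have := Set.ncard_union_le (f₁ '' (X₁ ∪ X₂)ᶜ) (f₁ '' (X₁ ∪ X₃)ᶜ)
      have := ncard_image_le_one h₁₃
      omega
    -- the loss of one part is compensated: either the second partition has no exceptional
    -- part at all, or `X₁` is nonempty
    rcases (X₂ ∪ X₃)ᶜ.eq_empty_or_nonempty with he | ⟨v, hv⟩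
    · rw [he, Set.image_empty, Set.ncard_empty] at b
      omega
    · have hv1 : v ∈ X₁ := by
        by_contra h
        exact hw ⟨v, h, fun h' => hv (Or.inl h'), fun h' => hv (Or.inr h')⟩
      have : 0 < X₁.ncard := (Set.ncard_pos).2 ⟨v, hv1⟩
      omega

/-- Some colour has no obstruction of Tutte–Berge type, hence admits a matching of size `k`
avoiding it. -/
lemma exists_matching_avoiding (k n : ℕ) (hk : 0 < k) (hn : 2 * k + (k - 1) / 3 ≤ n)
    (c : Fin n → Fin n → Fin 3) (hc : ∀ x y, c x y = c y x) :
    ∃ (i : Fin 3) (E : Finset (Fin n × Fin n)),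
      PairMatching E ∧ (∀ e ∈ E, c e.1 e.2 ≠ i) ∧ k ≤ E.card := by
  by_contra! hno
  obtain ⟨m, hm⟩ : ∃ m, 2 * k + m = n := ⟨n - 2 * k, by omega⟩
  let G : Fin 3 → SimpleGraph (Fin n) := fun i =>
    { Adj := fun u v => u ≠ v ∧ c u v ≠ i
      symm := ⟨fun u v h => ⟨h.1.symm, hc u v ▸ h.2⟩⟩
      loopless := ⟨fun _ h => h.1 rfl⟩ }
  have hB := fun i => berge (G i) k m hm (by
    rintro ⟨E, h1, h2, h3⟩
    exact absurd h3 (not_le.2 (hno i E h1 fun e he => (h2 e he).2)))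
  choose T X f hf hcard using hB
  have hcol : ∀ i u v, u ∉ X i → v ∉ X i → f i u ≠ f i v → c u v = i := by
    intro i u v hu hv huv
    by_contra h
    exact huv (hf i u v hu hv ⟨fun h' => huv (by rw [h']), h⟩)
  let R : Fin 3 → Fin 3 → Prop := fun i j =>
    ∀ u ∈ (X i ∪ X j)ᶜ, ∀ v ∈ (X i ∪ X j)ᶜ, f i u = f i v
  have htour : ∀ i j, i ≠ j → R i j ∨ R j i := by
    intro i j hij
    have := trivial_or_trivial (f i) (f j) (X i ∪ X j)ᶜ (by
      intro u hu v hv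
      by_contra! h
      have h1 := hcol i u v (fun h' => hu (Or.inl h')) (fun h' => hv (Or.inl h')) h.1
      have h2 := hcol j u v (fun h' => hu (Or.inr h')) (fun h' => hv (Or.inr h')) h.2
      exact hij (h1.symm.trans h2))
    rcases this with h | h
    · exact Or.inl h
    · right
      intro u hu v hv
      rw [Set.union_comm] at hu hv
      exact h u hu v hv
  have hlt : ∀ i j, R i j → (X i).ncard < (X j).ncard := by
    intro i j h
    have h1 := ncard_parts_le (f i) (X i) (X j)
    have h2 := ncard_image_le_one h
    have h3 : (X j \ X i).ncard ≤ (X j).ncard := Set.ncard_le_ncard Set.sdiff_subset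
    have h4 := hcard i
    omega
  have hle : ∀ i, (X i).ncard < k := by
    intro i
    have h1 : (f i '' (X i)ᶜ).ncard ≤ ((X i)ᶜ).ncard := Set.ncard_image_le (Set.toFinite _)
    have h2 := Set.ncard_add_ncard_compl (X i)
    rw [Nat.card_eq_fintype_card, Fintype.card_fin] at h2
    have h3 := hcard i
    omega
  have hbig : ∀ i j l, R i j → R i l → R j l → False := by
    intro i j l h1 h2 h3
    have h4 := three_mul_le (X i) (X j) (X l) (f i) (f j) (hcard i) (hcard j) h1 h2 h3
    have h5 := hle l
    omega
  rcases htour 0 1 (by decide) with h1 | h1 <;> rcases htour 0 2 (by decide) with h2 | h2 <;>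
    rcases htour 1 2 (by decide) with h3 | h3
  · exact hbig _ _ _ h1 h2 h3
  · exact hbig _ _ _ h2 h1 h3
  · have := hlt _ _ h1; have := hlt _ _ h2; have := hlt _ _ h3; omega
  · exact hbig _ _ _ h2 h3 h1
  · exact hbig _ _ _ h1 h3 h2
  · have := hlt _ _ h1; have := hlt _ _ h2; have := hlt _ _ h3; omega
  · exact hbig _ _ _ h3 h1 h2
  · exact hbig _ _ _ h3 h2 h1

/-- In any 3-coloring of the edges of `K_n` with `n ≥ 2k + ⌊(k-1)/3⌋`, there exist two
vertex-disjoint monochromatic matchings `M₁, M₂` (possibly of the same color) with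
`|M₁| + |M₂| ≥ k`. -/
theorem stmt_17 (k n : ℕ) (hn : 2 * k + (k - 1) / 3 ≤ n)
    (c : Fin n → Fin n → Fin 3) (hc : ∀ x y, c x y = c y x) :
    ∃ M₁ M₂ : Finset (Fin n × Fin n), PairMatching M₁ ∧ PairMatching M₂ ∧
      (∀ e ∈ M₁, ∀ f ∈ M₂, e.1 ≠ f.1 ∧ e.1 ≠ f.2 ∧ e.2 ≠ f.1 ∧ e.2 ≠ f.2) ∧
      (∃ i : Fin 3, ∀ e ∈ M₁, c e.1 e.2 = i) ∧
      (∃ i : Fin 3, ∀ e ∈ M₂, c e.1 e.2 = i) ∧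
      k ≤ M₁.card + M₂.card := by
  classical
  rcases Nat.eq_zero_or_pos k with rfl | hk
  · exact ⟨∅, ∅, by simp [PairMatching]⟩
  obtain ⟨i, E, hE, hEi, hEk⟩ := exists_matching_avoiding k n hk hn c hc
  have hthree : ∀ i a : Fin 3, a ≠ i → a ≠ i + 1 → a = i + 2 := by decide
  refine ⟨E.filter fun e => c e.1 e.2 = i + 1, E.filter fun e => ¬ c e.1 e.2 = i + 1,
    ?_, ?_, ?_, ⟨i + 1, ?_⟩, ⟨i + 2, ?_⟩, ?_⟩
  · exact ⟨fun e he => hE.1 e (Finset.mem_filter.1 he).1, fun e he f hf =>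
      hE.2 e (Finset.mem_filter.1 he).1 f (Finset.mem_filter.1 hf).1⟩
  · exact ⟨fun e he => hE.1 e (Finset.mem_filter.1 he).1, fun e he f hf =>
      hE.2 e (Finset.mem_filter.1 he).1 f (Finset.mem_filter.1 hf).1⟩
  · intro e he f hf
    rw [Finset.mem_filter] at he hf
    refine hE.2 e he.1 f hf.1 ?_
    rintro rfl
    exact hf.2 he.2
  · exact fun e he => (Finset.mem_filter.1 he).2
  · intro e he
    rw [Finset.mem_filter] at he
    exact hthree i _ (hEi e he.1) he.2
  · rw [Finset.card_filter_add_card_filter_not]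
    exact hEk
end
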